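/- Let Γ be a set whose cardinality |Γ| is a Kunen cardinal. Then Ba(ℓ¹(Γ)_w) = Bo(ℓ¹(Γ)), i.e. the σ-algebra on ℓ¹(Γ) generated by all continuous linear functionals coincides with the Borel σ-algebra of the norm topology. -/

import Mathlib

/-- The σ-algebra on `Γ × Γ` generated by all rectangles `A ×ˢ B` with `A, B ⊆ Γ`. -/
def productSigma (Γ : Type*) : MeasurableSpace (Γ × Γ) :=
  MeasurableSpace.generateFrom {S : Set (Γ × Γ) | ∃ A B : Set Γ, S = A ×ˢ B}

/-- `|Γ|` is a Kunen cardinal. -/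
def IsKunen (Γ : Type*) : Prop := productSigma Γ = ⊤

/-- The Baire σ-algebra of the weak topology of a normed space `X`: the σ-algebra
generated by all continuous linear functionals on `X`. -/
def BaW (X : Type*) [NormedAddCommGroup X] [NormedSpace ℝ X] : MeasurableSpace X :=
  ⨆ φ : X →L[ℝ] ℝ, MeasurableSpace.comap φ Real.measurableSpace

/-!
If `|Γ|` is a Kunen cardinal, the diagonal of `Γ × Γ` lies in the product σ-algebra, which yields an
injection `Γ → 2^ℕ`, and hence finite partitions of `Γ` that eventually separate any two points.
For `x ∈ ℓ¹(Γ)` and a cell `B`, the sum of `x` over `B` is a weak Baire function of `x`; passing to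
the limit along the partitions, so is the sum of `|x|` over `B`, and so is the condition that a
point of a given set carries most of the mass of `|x|` on `B`. The `n`-th approximation of `x` puts,
for each cell of the `n`-th partition with such a dominant point, the sum of `x` over the cell at
that point. It is determined by the finite tuples of the sums and of the dominant points, and the
tuples of points form a power `Γ^k` on which, by the Kunen property again, every set is in the
product σ-algebra. So the approximations are measurable from the weak Baire to the norm Borel
σ-algebra, and they converge in norm to `x` by dominated convergence.
-/

open Filter Function MeasureTheory Set Topology
open scoped ENNReal

theorem nonempty_pi_embedding (α ι : Type*) [Infinite α] [Finite ι] : Nonempty ((ι → α) ↪ α) := by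
  have hcard : Cardinal.mk (Fin (Nat.card ι) → α) ≤ Cardinal.mk α := by
    simpa using Cardinal.power_nat_le (n := Nat.card ι) (Cardinal.aleph0_le_mk α)
  exact hcard.map ((Finite.equivFin ι).arrowCongr (.refl α)).toEmbedding.trans

section MeasurableSpaces

variable {α β : Type*} [MeasurableSpace α] [MeasurableSpace β]

theorem exists_countable_separating_sections {S : Set (α × β)} (hS : MeasurableSet S) :
    ∃ 𝒞 : Set (Set α), 𝒞.Countable ∧ (∀ s ∈ 𝒞, MeasurableSet s) ∧
      ∀ a a', (∀ s ∈ 𝒞, a ∈ s ↔ a' ∈ s) → ∀ b, (a, b) ∈ S ↔ (a', b) ∈ S := by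
  rw [← generateFrom_prod] at hS
  induction S, hS using MeasurableSpace.generateFrom_induction with
  | hC _ hrect _ =>
    obtain ⟨A, hA, B, -, rfl⟩ := hrect
    exact ⟨{A}, countable_singleton A, by simpa using hA, fun a a' h b => by simp [h A rfl]⟩
  | empty => exact ⟨∅, countable_empty, by simp, by simp⟩
  | compl S _ ih =>
    obtain ⟨𝒞, hcount, hmeas, hsep⟩ := ih
    exact ⟨𝒞, hcount, hmeas, fun a a' h b => not_congr (hsep a a' h b)⟩
  | iUnion S _ ih =>
    choose 𝒞 hcount hmeas hsep using ih
    refine ⟨⋃ n, 𝒞 n, countable_iUnion hcount, fun s hs => ?_, fun a a' h b => ?_⟩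
    · obtain ⟨n, hn⟩ := mem_iUnion.1 hs
      exact hmeas n s hn
    · simp only [mem_iUnion]
      exact exists_congr fun n =>
        hsep n a a' (fun s hs => h s (mem_iUnion_of_mem n hs)) b

theorem countablySeparated_of_measurableEq [MeasurableEq α] :
    MeasurableSpace.CountablySeparated α := by
  obtain ⟨𝒞, hcount, hmeas, hsep⟩ :=
    exists_countable_separating_sections (measurableSet_diagonal (α := α))
  exact ⟨⟨𝒞, hcount, hmeas, fun a _ a' _ h => ((hsep a a' h a).1 rfl).symm⟩⟩

theorem discreteMeasurableSpace_of_injective [DiscreteMeasurableSpace β] {f : α → β}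
    (hf : Measurable f) (hinj : Injective f) : DiscreteMeasurableSpace α where
  forall_measurableSet s := hinj.preimage_image s ▸ hf .of_discrete

theorem discreteMeasurableSpace_of_prod_self [DiscreteMeasurableSpace (α × α)] :
    DiscreteMeasurableSpace α :=
  discreteMeasurableSpace_of_injective (measurable_id.prodMk measurable_id)
    fun _ _ h => congrArg Prod.fst h

theorem discreteMeasurableSpace_pi [DiscreteMeasurableSpace (α × α)] (ι : Type*) [Finite ι] :
    DiscreteMeasurableSpace (ι → α) := by
  have : DiscreteMeasurableSpace α := discreteMeasurableSpace_of_prod_self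
  cases finite_or_infinite α
  · infer_instance
  induction ι using Finite.induction_empty_option with
  | of_equiv e ih =>
    exact discreteMeasurableSpace_of_injective
      (measurable_pi_lambda _ fun i => measurable_pi_apply (e i)) e.surjective.injective_comp_right
  | h_empty => infer_instance
  | @h_option ι _ ih =>
    obtain ⟨j⟩ := nonempty_pi_embedding α ι
    have hmeas : Measurable fun g : Option ι → α => (g none, j fun i => g (some i)) :=
      (measurable_pi_apply none).prodMk (Measurable.of_discrete.comp
        (measurable_pi_lambda _ fun i => measurable_pi_apply (some i)))
    refine discreteMeasurableSpace_of_injective hmeas fun g g' h => ?_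
    obtain ⟨hnone, hsome⟩ := Prod.mk.inj h
    exact funext (Option.forall.2 ⟨hnone, congrFun (j.injective hsome)⟩)

end MeasurableSpaces

theorem IsKunen.discreteMeasurableSpace_prod {Γ : Type*} [MeasurableSpace Γ]
    [DiscreteMeasurableSpace Γ] (h : IsKunen Γ) : DiscreteMeasurableSpace (Γ × Γ) where
  forall_measurableSet S := by
    have hle : productSigma Γ ≤ Prod.instMeasurableSpace := by
      refine MeasurableSpace.generateFrom_le ?_
      rintro _ ⟨A, B, rfl⟩
      exact MeasurableSet.of_discrete.prod .of_discrete
    exact hle S (h ▸ MeasurableSpace.measurableSet_top)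

/-- A sequence of maps on `Γ` any two distinct points of which are separated by all but finitely
many terms. The fibres of `π n` play the role of the `n`-th of a sequence of finer and finer
partitions, although no refinement is required. -/
def EventuallySeparates {Γ : Type*} {ι : ℕ → Type*} (π : ∀ n, Γ → ι n) : Prop :=
  ∀ ⦃γ δ : Γ⦄, γ ≠ δ → ∀ᶠ n in atTop, π n γ ≠ π n δ

theorem eventuallySeparates_restrict {Γ κ : Type*} {e : Γ → ℕ → κ} (he : Injective e) :
    EventuallySeparates fun n γ (i : Fin n) => e γ i := by
  intro γ δ hne
  obtain ⟨k, hk⟩ := ne_iff.1 (he.ne hne)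
  filter_upwards [eventually_gt_atTop k] with n hn heq
  exact hk (congrFun heq ⟨k, hn⟩)

theorem EventuallySeparates.tendsto_tsum_indicator {Γ : Type*} {ι : ℕ → Type*} {π : ∀ n, Γ → ι n}
    (hπ : EventuallySeparates π) {x : Γ → ℝ} (hx : Summable x) (γ : Γ) :
    Tendsto (fun n => ∑' δ, (π n ⁻¹' {π n γ}).indicator x δ) atTop (𝓝 (x γ)) := by
  have hsingle : ∑' δ, ({γ} : Set Γ).indicator x δ = x γ := by
    classical
    simp [indicator_apply]
  rw [← hsingle]
  refine tendsto_tsum_of_dominated_convergence hx.norm (fun δ => ?_)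
    (.of_forall fun n δ => norm_indicator_le_norm_self x δ)
  refine tendsto_const_nhds.congr' ?_
  obtain rfl | hne := eq_or_ne δ γ
  · exact .of_forall fun n => by simp
  · filter_upwards [hπ hne] with n hn
    rw [indicator_of_notMem (by simpa using hne), indicator_of_notMem (by simpa using hn)]

/-- A measurable family of elements of `ℓ¹(Γ)`: each `p y` is summable, and its sum over any fixed
subset of `Γ` depends measurably on `y`. The members are plain functions rather than elements of
`lp` so that they can be modified pointwise. -/
structure IsSetwiseMeasurable {Y Γ : Type*} [MeasurableSpace Y] (p : Y → Γ → ℝ) : Prop where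
  summable (y : Y) : Summable (p y)
  measurable_tsum_indicator (B : Set Γ) : Measurable fun y => ∑' γ, B.indicator (p y) γ

namespace IsSetwiseMeasurable

variable {Y Γ : Type*} [MeasurableSpace Y] {p : Y → Γ → ℝ}

theorem weight_mul {κ : Type*} [Finite κ] (hp : IsSetwiseMeasurable p) (π : Γ → κ) {w : Y → κ → ℝ}
    (hw : ∀ c, Measurable fun y => w y c) : IsSetwiseMeasurable fun y γ => w y (π γ) * p y γ := by
  cases nonempty_fintype κ
  have hdecomp (y : Y) (B : Set Γ) : (B.indicator fun γ => w y (π γ) * p y γ) =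
      fun γ => ∑ c, w y c * (B ∩ π ⁻¹' {c}).indicator (p y) γ := by
    classical
    ext γ
    by_cases hγ : γ ∈ B <;> simp [indicator_apply, hγ]
  have hsummable (y : Y) (B : Set Γ) (c : κ) :
      Summable fun γ => w y c * (B ∩ π ⁻¹' {c}).indicator (p y) γ :=
    ((hp.summable y).indicator _).mul_left _
  refine ⟨fun y => ?_, fun B => ?_⟩
  · rw [← indicator_univ fun γ => w y (π γ) * p y γ, hdecomp]
    exact summable_sum fun c _ => hsummable y univ c
  · simp_rw [hdecomp, Summable.tsum_finsetSum fun c _ => hsummable _ B c, tsum_mul_left]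
    exact Finset.measurable_sum _ fun c _ => (hw c).mul (hp.measurable_tsum_indicator _)

theorem of_tendsto_of_dominated {q : ℕ → Y → Γ → ℝ} {b : Y → Γ → ℝ}
    (hq : ∀ n, IsSetwiseMeasurable (q n)) (hb : ∀ y, Summable (b y))
    (hqb : ∀ n y γ, |q n y γ| ≤ b y γ)
    (hlim : ∀ y γ, Tendsto (fun n => q n y γ) atTop (𝓝 (p y γ))) : IsSetwiseMeasurable p := by
  refine ⟨fun y => ?_, fun B => ?_⟩
  · exact .of_norm_bounded (hb y) fun γ =>
      le_of_tendsto (hlim y γ).norm (.of_forall fun n => hqb n y γ)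
  · refine measurable_of_tendsto_metrizable (fun n => (hq n).measurable_tsum_indicator B)
      (tendsto_pi_nhds.2 fun y => ?_)
    refine tendsto_tsum_of_dominated_convergence (hb y) (fun γ => ?_) (.of_forall fun n γ => ?_)
    · by_cases hγ : γ ∈ B
      · simpa only [indicator_of_mem hγ] using hlim y γ
      · simp only [indicator_of_notMem hγ, tendsto_const_nhds]
    · exact (norm_indicator_le_norm_self _ γ).trans (hqb n y γ)

variable {ι : ℕ → Type*} [∀ n, Finite (ι n)] {π : ∀ n, Γ → ι n}

theorem of_tendsto_weight_mul (hp : IsSetwiseMeasurable p) (π : ∀ n, Γ → ι n)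
    {w : ∀ n, Y → ι n → ℝ} (hw : ∀ n c, Measurable fun y => w n y c)
    (hw_le : ∀ n y c, |w n y c| ≤ 1) {q : Y → Γ → ℝ}
    (hlim : ∀ y γ, Tendsto (fun n => w n y (π n γ) * p y γ) atTop (𝓝 (q y γ))) :
    IsSetwiseMeasurable q :=
  of_tendsto_of_dominated (fun n => hp.weight_mul (π n) (hw n)) (fun y => (hp.summable y).abs)
    (fun n y γ => (abs_mul _ _).trans_le
      (mul_le_of_le_one_left (abs_nonneg _) (hw_le n y (π n γ)))) hlim

theorem abs (hp : IsSetwiseMeasurable p) (hπ : EventuallySeparates π) :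
    IsSetwiseMeasurable fun y γ => |p y γ| := by
  let cellSum (n : ℕ) (y : Y) (c : ι n) : ℝ := ∑' δ, (π n ⁻¹' {c}).indicator (p y) δ
  refine hp.of_tendsto_weight_mul π (w := fun n y c => cellSum n y c / |cellSum n y c|)
    (fun n c => ?_) (fun n y c => ?_) fun y γ => ?_
  · have hmeas := hp.measurable_tsum_indicator (π n ⁻¹' {c})
    exact hmeas.div hmeas.abs
  · rw [abs_div, abs_abs]
    exact div_self_le_one _
  · obtain hzero | hne := eq_or_ne (p y γ) 0
    · simp [hzero]
    · have hlim := hπ.tendsto_tsum_indicator (hp.summable y) γ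
      have habs : p y γ / |p y γ| * p y γ = |p y γ| := by
        rw [div_mul_eq_mul_div, ← abs_mul_abs_self, mul_self_div_self]
      exact habs ▸ (hlim.div hlim.abs (abs_ne_zero.2 hne)).mul_const (p y γ)

theorem indicator_superlevel (hp : IsSetwiseMeasurable p) (hπ : EventuallySeparates π)
    (hp_nonneg : ∀ y γ, 0 ≤ p y γ) {t : Y → ℝ} (ht : Measurable t) :
    IsSetwiseMeasurable fun y => {γ | t y ≤ p y γ}.indicator (p y) := by
  classical
  refine hp.of_tendsto_weight_mul π
    (w := fun n y c => if t y ≤ ∑' δ, (π n ⁻¹' {c}).indicator (p y) δ then 1 else 0)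
    (fun n c => .ite (measurableSet_le ht (hp.measurable_tsum_indicator _))
      measurable_const measurable_const)
    (fun n y c => by split_ifs <;> simp) fun y γ => tendsto_const_nhds.congr' ?_
  by_cases hγ : t y ≤ p y γ
  · have hle (n : ℕ) : p y γ ≤ ∑' δ, (π n ⁻¹' {π n γ}).indicator (p y) δ := by
      simpa using ((hp.summable y).indicator (π n ⁻¹' {π n γ})).le_tsum γ
        fun δ _ => indicator_nonneg (fun δ _ => hp_nonneg y δ) δ
    exact .of_forall fun n => by simp [hγ, hγ.trans (hle n)]
  · filter_upwards [(hπ.tendsto_tsum_indicator (hp.summable y) γ).eventually_lt_const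
      (not_le.1 hγ)] with n hn
    simp [hγ, hn.not_ge]

theorem measurableSet_exists_le_abs (hp : IsSetwiseMeasurable p) (hπ : EventuallySeparates π)
    {t : Y → ℝ} (ht : Measurable t) (A : Set Γ) :
    MeasurableSet {y | ∃ γ ∈ A, p y γ ≠ 0 ∧ t y ≤ |p y γ|} := by
  have hsuper := (hp.abs hπ).indicator_superlevel hπ (fun _ _ => abs_nonneg _) ht
  convert (hsuper.measurable_tsum_indicator A) (measurableSet_singleton 0).compl using 1
  ext y
  have hnonneg : 0 ≤ A.indicator ({γ | t y ≤ |p y γ|}.indicator fun γ => |p y γ|) :=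
    indicator_nonneg fun _ _ => indicator_nonneg (fun _ _ => abs_nonneg _) _
  have hzero := ((hsuper.summable y).indicator A).hasSum_iff.symm.trans
    (hasSum_zero_iff_of_nonneg hnonneg)
  rw [mem_preimage, mem_compl_singleton_iff, Ne, hzero]
  classical
  simp [funext_iff, indicator_apply, and_comm]

end IsSetwiseMeasurable

/-- The point `γ` carries at least two thirds of the mass that `|x|` gives to `B`. More than half
makes such a point unique; a non-strict inequality makes its existence a measurable condition. -/
structure IsDominant {Γ : Type*} (x : Γ → ℝ) (B : Set Γ) (γ : Γ) : Prop where
  mem : γ ∈ B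
  ne_zero : x γ ≠ 0
  le_abs : 2 / 3 * ∑' δ, B.indicator (fun δ => |x δ|) δ ≤ |x γ|

section Dominant

variable {Γ : Type*} {x : Γ → ℝ} {B : Set Γ} {γ δ : Γ}

theorem IsDominant.eq (hx : Summable x) (hγ : IsDominant x B γ) (hδ : IsDominant x B δ) :
    γ = δ := by
  classical
  by_contra hne
  have hpair : |x γ| + |x δ| ≤ ∑' δ, B.indicator (fun δ => |x δ|) δ := by
    simpa [Finset.sum_pair hne, hγ.mem, hδ.mem] using (hx.abs.indicator B).sum_le_tsum {γ, δ}
      fun _ _ => indicator_nonneg (fun _ _ => abs_nonneg _) _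
  linarith [hγ.le_abs, hδ.le_abs, abs_pos.2 hγ.ne_zero, abs_pos.2 hδ.ne_zero]

theorem IsDominant.abs_tsum_le (hx : Summable x) (hγ : IsDominant x B γ) :
    |∑' δ, B.indicator x δ| ≤ 3 / 2 * |x γ| := by
  have habs : |∑' δ, B.indicator x δ| ≤ ∑' δ, B.indicator (fun δ => |x δ|) δ := by
    simpa [norm_indicator_eq_indicator_norm] using norm_tsum_le_tsum_norm (hx.indicator B).norm
  linarith [hγ.le_abs]

theorem EventuallySeparates.eventually_isDominant {ι : ℕ → Type*} {π : ∀ n, Γ → ι n}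
    (hπ : EventuallySeparates π) (hx : Summable x) (hγ : x γ ≠ 0) :
    ∀ᶠ n in atTop, IsDominant x (π n ⁻¹' {π n γ}) γ := by
  have hlt : |x γ| < 3 / 2 * |x γ| := by linarith [abs_pos.2 hγ]
  filter_upwards [(hπ.tendsto_tsum_indicator hx.abs γ).eventually_lt_const hlt] with n hn
  exact ⟨rfl, hγ, by linarith⟩

/-- The dominant point of `x` in `B`, and an arbitrary point of `Γ` if there is none. -/
noncomputable def dominantPoint [Nonempty Γ] (x : Γ → ℝ) (B : Set Γ) : Γ :=
  Classical.epsilon (IsDominant x B)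

open scoped Classical in
/-- The sum of `x` over `B`, replaced by `0` if `x` has no dominant point in `B`. -/
noncomputable def dominantMass (x : Γ → ℝ) (B : Set Γ) : ℝ :=
  if ∃ γ, IsDominant x B γ then ∑' γ, B.indicator x γ else 0

theorem dominantMass_eq_zero (h : ∀ γ, ¬IsDominant x B γ) : dominantMass x B = 0 :=
  if_neg (not_exists.2 h)

theorem IsDominant.dominantPoint_eq [Nonempty Γ] (hx : Summable x) (hγ : IsDominant x B γ) :
    dominantPoint x B = γ :=
  IsDominant.eq hx (Classical.epsilon_spec ⟨γ, hγ⟩) hγ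

theorem IsDominant.dominantMass_eq (hγ : IsDominant x B γ) :
    dominantMass x B = ∑' γ, B.indicator x γ :=
  if_pos ⟨γ, hγ⟩

open scoped Classical in
/-- The approximation of `x` in `ℓ¹(Γ)` that moves the sum of `x` over each fibre of `π` with a
dominant point to that point, and forgets `x` on the other fibres. -/
noncomputable def dominantApprox [Nonempty Γ] {κ : Type*} [Fintype κ] (π : Γ → κ) (x : Γ → ℝ) :
    lp (fun _ : Γ => ℝ) 1 :=
  ∑ c, lp.single 1 (dominantPoint x (π ⁻¹' {c})) (dominantMass x (π ⁻¹' {c}))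

open scoped Classical in
theorem dominantApprox_apply [Nonempty Γ] {κ : Type*} [Fintype κ] (π : Γ → κ) (hx : Summable x)
    (γ : Γ) : dominantApprox π x γ =
      if IsDominant x (π ⁻¹' {π γ}) γ then ∑' δ, (π ⁻¹' {π γ}).indicator x δ else 0 := by
  have hterm (c : κ) : (lp.single 1 (dominantPoint x (π ⁻¹' {c})) (dominantMass x (π ⁻¹' {c})) :
      lp (fun _ : Γ => ℝ) 1) γ =
      if IsDominant x (π ⁻¹' {c}) γ then ∑' δ, (π ⁻¹' {c}).indicator x δ else 0 := by
    by_cases hex : ∃ δ, IsDominant x (π ⁻¹' {c}) δ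
    · obtain ⟨δ, hδ⟩ := hex
      rw [hδ.dominantPoint_eq hx, hδ.dominantMass_eq]
      obtain rfl | hne := eq_or_ne γ δ
      · simp [hδ]
      · rw [lp.single_apply_ne _ _ _ hne, if_neg fun hγ => hne (hγ.eq hx hδ)]
    · rw [not_exists] at hex
      simp [dominantMass_eq_zero hex, hex γ]
  rw [dominantApprox, lp.coeFn_sum, Finset.sum_apply]
  simp_rw [hterm]
  exact Finset.sum_eq_single_of_mem (π γ) (Finset.mem_univ _) fun c _ hc =>
    if_neg fun hγ => hc hγ.mem.symm

theorem abs_dominantApprox_apply_le [Nonempty Γ] {κ : Type*} [Fintype κ] (π : Γ → κ)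
    (hx : Summable x) (γ : Γ) : |dominantApprox π x γ| ≤ 3 / 2 * |x γ| := by
  rw [dominantApprox_apply π hx]
  split_ifs with hγ
  · exact hγ.abs_tsum_le hx
  · simp

theorem tendsto_dominantApprox_apply [Nonempty Γ] {ι : ℕ → Type*} [∀ n, Fintype (ι n)]
    {π : ∀ n, Γ → ι n} (hπ : EventuallySeparates π) (hx : Summable x) (γ : Γ) :
    Tendsto (fun n => dominantApprox (π n) x γ) atTop (𝓝 (x γ)) := by
  classical
  simp_rw [dominantApprox_apply _ hx]
  obtain hzero | hne := eq_or_ne (x γ) 0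
  · have hnot (B : Set Γ) : ¬IsDominant x B γ := fun h => h.ne_zero hzero
    simp [hnot, hzero]
  · refine (hπ.tendsto_tsum_indicator hx γ).congr' ?_
    filter_upwards [hπ.eventually_isDominant hx hne] with n hn
    rw [if_pos hn]

theorem lp_one_norm_eq_tsum {E : Γ → Type*} [∀ γ, NormedAddCommGroup (E γ)] (x : lp E 1) :
    ‖x‖ = ∑' γ, ‖x γ‖ := by
  simpa using lp.norm_eq_tsum_rpow (by simp) x

theorem tendsto_lp_one_of_dominated {E : Γ → Type*} [∀ γ, NormedAddCommGroup (E γ)] {α : Type*}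
    {l : Filter α} {u : α → lp E 1} {x : lp E 1} {b : Γ → ℝ} (hb : Summable b)
    (hub : ∀ a γ, ‖u a γ‖ ≤ b γ) (hlim : ∀ γ, Tendsto (fun a => u a γ) l (𝓝 (x γ))) :
    Tendsto u l (𝓝 x) := by
  have hx : Summable fun γ => ‖x γ‖ := by simpa using (lp.memℓp x).summable (by simp)
  rw [tendsto_iff_norm_sub_tendsto_zero]
  simp_rw [lp_one_norm_eq_tsum]
  rw [← tsum_zero (α := ℝ) (β := Γ)]
  refine tendsto_tsum_of_dominated_convergence (hb.add hx)
    (fun γ => tendsto_iff_norm_sub_tendsto_zero.1 (hlim γ)) (.of_forall fun a γ => ?_)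
  rw [norm_norm]
  exact (norm_sub_le _ _).trans (add_le_add_left (hub a γ) _)

theorem tendsto_dominantApprox [Nonempty Γ] {ι : ℕ → Type*} [∀ n, Fintype (ι n)]
    {π : ∀ n, Γ → ι n} (hπ : EventuallySeparates π) (x : lp (fun _ : Γ => ℝ) 1) :
    Tendsto (fun n => dominantApprox (π n) x) atTop (𝓝 x) :=
  have hx : Summable x := (lp.memℓp x).summable_of_one
  tendsto_lp_one_of_dominated (hx.abs.mul_left (3 / 2))
    (fun n => abs_dominantApprox_apply_le (π n) hx) (tendsto_dominantApprox_apply hπ hx)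

end Dominant

section Measurability

variable {Y Γ : Type*} [MeasurableSpace Y]

theorem measurable_epsilon [Nonempty Γ] [MeasurableSpace Γ] {r : Y → Γ → Prop}
    (hunique : ∀ ⦃y γ δ⦄, r y γ → r y δ → γ = δ)
    (hr : ∀ A : Set Γ, MeasurableSet {y | ∃ γ ∈ A, r y γ}) :
    Measurable fun y => Classical.epsilon (r y) := by
  intro A _
  have hpreimage : (fun y => Classical.epsilon (r y)) ⁻¹' A =
      {y | ∃ γ ∈ A, r y γ} ∪
        ({y | ∃ γ ∈ univ, r y γ}ᶜ ∩ {_y | Classical.epsilon (fun _ : Γ => False) ∈ A}) := by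
    ext y
    by_cases hex : ∃ γ, r y γ
    · have hspec := Classical.epsilon_spec hex
      have hmem : (∃ γ ∈ A, r y γ) ↔ Classical.epsilon (r y) ∈ A :=
        ⟨fun ⟨γ, hA, hγ⟩ => hunique hspec hγ ▸ hA, fun hA => ⟨_, hA, hspec⟩⟩
      simp [hmem, hex]
    · have hfalse : r y = fun _ => False := by simpa [funext_iff] using hex
      simp [hfalse]
  rw [hpreimage]
  exact (hr A).union ((hr univ).compl.inter (.const _))

open scoped Classical in
theorem measurable_sum_lp_single [MeasurableSpace Γ] {κ : Type*} [Fintype κ]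
    [DiscreteMeasurableSpace (κ → Γ)] [MeasurableSpace (lp (fun _ : Γ => ℝ) 1)]
    [BorelSpace (lp (fun _ : Γ => ℝ) 1)] :
    Measurable fun z : (κ → ℝ) × (κ → Γ) =>
      ∑ c, (lp.single 1 (z.2 c) (z.1 c) : lp (fun _ : Γ => ℝ) 1) := by
  refine measurable_uncurry_of_continuous_of_measurable
    (u := fun (r : κ → ℝ) (g : κ → Γ) => ∑ c, (lp.single 1 (g c) (r c) : lp (fun _ : Γ => ℝ) 1))
    (fun g => ?_) fun r => .of_discrete
  exact continuous_finsetSum _ fun c _ => (lp.isometry_single (g c)).continuous.comp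
    (continuous_apply c)

namespace IsSetwiseMeasurable

variable {p : Y → Γ → ℝ} {ι : ℕ → Type*} [∀ n, Finite (ι n)] {π : ∀ n, Γ → ι n}

theorem measurableSet_exists_isDominant (hp : IsSetwiseMeasurable p) (hπ : EventuallySeparates π)
    (A B : Set Γ) : MeasurableSet {y | ∃ γ ∈ A, IsDominant (p y) B γ} := by
  convert hp.measurableSet_exists_le_abs hπ
    (((hp.abs hπ).measurable_tsum_indicator B).const_mul (2 / 3)) (A ∩ B) using 1
  ext y
  exact exists_congr fun γ => ⟨fun ⟨hA, h⟩ => ⟨⟨hA, h.mem⟩, h.ne_zero, h.le_abs⟩,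
    fun ⟨⟨hA, hB⟩, hne, hle⟩ => ⟨hA, hB, hne, hle⟩⟩

theorem measurable_dominantPoint (hp : IsSetwiseMeasurable p) (hπ : EventuallySeparates π)
    [Nonempty Γ] [MeasurableSpace Γ] (B : Set Γ) : Measurable fun y => dominantPoint (p y) B :=
  measurable_epsilon (fun y _ _ => IsDominant.eq (hp.summable y))
    fun A => hp.measurableSet_exists_isDominant hπ A B

theorem measurable_dominantMass (hp : IsSetwiseMeasurable p) (hπ : EventuallySeparates π)
    (B : Set Γ) : Measurable fun y => dominantMass (p y) B :=
  .ite (by simpa using hp.measurableSet_exists_isDominant hπ univ B)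
    (hp.measurable_tsum_indicator B) measurable_const

variable [MeasurableSpace Γ] [MeasurableSpace (lp (fun _ : Γ => ℝ) 1)]
  [BorelSpace (lp (fun _ : Γ => ℝ) 1)]

theorem measurable_dominantApprox [Nonempty Γ] {κ : Type*} [Fintype κ]
    [DiscreteMeasurableSpace (κ → Γ)] (hp : IsSetwiseMeasurable p) (hπ : EventuallySeparates π)
    (ρ : Γ → κ) : Measurable fun y => dominantApprox ρ (p y) :=
  measurable_sum_lp_single.comp <|
    (measurable_pi_lambda _ fun _ => hp.measurable_dominantMass hπ _).prodMk
      (measurable_pi_lambda _ fun _ => hp.measurable_dominantPoint hπ _)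

theorem measurable_lp_one [DiscreteMeasurableSpace (Γ × Γ)] {f : Y → lp (fun _ : Γ => ℝ) 1}
    (hf : IsSetwiseMeasurable fun y => (f y : Γ → ℝ)) : Measurable f := by
  cases isEmpty_or_nonempty Γ
  · have : Subsingleton (lp (fun _ : Γ => ℝ) 1) := ⟨fun x y => lp.ext (Subsingleton.elim _ _)⟩
    exact measurable_of_subsingleton_codomain f
  have : MeasurableEq Γ := ⟨.of_discrete⟩
  have := countablySeparated_of_measurableEq (α := Γ)
  obtain ⟨e, -, he⟩ := MeasurableSpace.measurable_injection_nat_bool_of_countablySeparated Γ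
  have hπ := eventuallySeparates_restrict he
  have (n : ℕ) : DiscreteMeasurableSpace ((Fin n → Bool) → Γ) := discreteMeasurableSpace_pi _
  exact measurable_of_tendsto_metrizable (fun n => hf.measurable_dominantApprox hπ _)
    (tendsto_pi_nhds.2 fun y => tendsto_dominantApprox hπ (f y))

end IsSetwiseMeasurable

end Measurability

theorem measurable_baW {X : Type*} [NormedAddCommGroup X] [NormedSpace ℝ X] (φ : X →L[ℝ] ℝ) :
    Measurable[BaW X] φ :=
  measurable_iff_comap_le.2
    (le_iSup (fun ψ : X →L[ℝ] ℝ => MeasurableSpace.comap ψ Real.measurableSpace) φ)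

theorem baW_le_borel (X : Type*) [NormedAddCommGroup X] [NormedSpace ℝ X] : BaW X ≤ borel X :=
  iSup_le fun φ => by
    borelize X
    exact φ.continuous.measurable.comap_le

theorem isSetwiseMeasurable_baW (Γ : Type*) :
    @IsSetwiseMeasurable _ Γ (BaW (lp (fun _ : Γ => ℝ) 1)) fun x => x := by
  refine @IsSetwiseMeasurable.mk _ Γ (BaW _) _ (fun x => (lp.memℓp x).summable_of_one) fun B => ?_
  let b : lp (fun _ : Γ => ℝ) ∞ := ⟨B.indicator 1, memℓp_infty ⟨1, by
    rintro _ ⟨γ, rfl⟩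
    exact (norm_indicator_le_norm_self _ γ).trans (by simp)⟩⟩
  let φ : lp (fun _ : Γ => ℝ) 1 →L[ℝ] ℝ :=
    lp.dualPairing ∞ 1 (fun _ => ContinuousLinearMap.mul ℝ ℝ) (K := 1) (fun _ => by simp) b
  have hφ (x : lp (fun _ : Γ => ℝ) 1) : φ x = ∑' γ, B.indicator x γ := by
    classical
    calc φ x = ∑' γ, B.indicator 1 γ * x γ := lp.dualPairing_apply ..
      _ = ∑' γ, B.indicator x γ := by simp [indicator_apply]
  simp_rw [← hφ]
  exact measurable_baW φ

/-- (Fremlin) If `|Γ|` is a Kunen cardinal, then `Ba(ℓ¹(Γ)_w) = Bo(ℓ¹(Γ))`. -/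
theorem stmt4 (Γ : Type*) (h : IsKunen Γ) :
    BaW (lp (fun _ : Γ => ℝ) 1) = borel (lp (fun _ : Γ => ℝ) 1) := by
  refine (baW_le_borel _).antisymm ?_
  let : MeasurableSpace Γ := ⊤
  have : DiscreteMeasurableSpace (Γ × Γ) := h.discreteMeasurableSpace_prod
  borelize ↥(lp (fun _ : Γ => ℝ) 1)
  have hid : Measurable[BaW _] (id : lp (fun _ : Γ => ℝ) 1 → lp (fun _ : Γ => ℝ) 1) :=
    @IsSetwiseMeasurable.measurable_lp_one _ Γ (BaW _) _ _ _ _ id (isSetwiseMeasurable_baW Γ)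
  exact fun s hs => hid hs
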